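/- Let n be a positive integer and let R = ℤ[X]/(X^n). For every complex number s with Re(s) > 1, the series Σ_{k≥1} a_R(k) k^{−s} converges and equals the product ∏_{j=1}^{n} ζ(js − (j−1)), where ζ is the Riemann zeta function. -/

import Mathlib

/-- `idealCount R k` is the number of ideals `I` of `R` such that `R ⧸ I` is finite
with exactly `k` elements. -/
noncomputable def idealCount (R : Type) [CommRing R] (k : ℕ) : ℕ :=
  Set.ncard {I : Ideal R | Nat.card (R ⧸ I) = k}

/-!
Let `A` be an infinite Dedekind domain. For an ideal `I ⊆ A[X]` write `I₀ ⊆ A` for its ideal of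
constant coefficients, and `N(I)` for its norm. Multiplication by `X` on `A[X] ⧸ I` gives
`N(I) = N(I : X) N(I₀)`. If `J` and `0 ≠ 𝔡 ⊆ J₀` are prescribed, the ideals `I` with `(I : X) = J`
and `I₀ = 𝔡` are obtained from one another by moving a single generator `f ∈ J` by an element of
`X (J : X)`, which matters only modulo `X J`; there are `[(J : X) : J] = N(J₀)` of them. Hence,
writing `I₀ = 𝔪 (I : X)₀`, the sums `F n (s, t) = ∑ N(I) ^ (-s) N(I₀) ^ (-t)` over the ideals
`I ∋ X ^ n` of finite index satisfy `F (n + 1) (s, t) = F n (s, s + t - 1) ζ_A(s + t)`, and the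
theorem is the case `t = 0`.
-/

open Polynomial Ideal

section Index

variable {R : Type*} [CommRing R]

theorem cardQuot_comap_of_surjective {S : Type*} [CommRing S] {f : R →+* S}
    (hf : Function.Surjective f) (I : Ideal S) : (I.comap f).cardQuot = I.cardQuot :=
  AddSubgroup.index_comap_of_surjective I.toAddSubgroup (f := f.toAddMonoidHom) hf

theorem cardQuot_comap_dvd {S : Type*} [CommRing S] (f : R →+* S) (I : Ideal S) :
    (I.comap f).cardQuot ∣ I.cardQuot := by
  have comap_index : (I.comap f).cardQuot = _ :=
    AddSubgroup.index_comap I.toAddSubgroup f.toAddMonoidHom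
  rw [comap_index]
  exact AddSubgroup.relIndex_dvd_index_of_normal _ _

theorem cardQuot_eq_colon_mul_sup (I : Ideal R) (x : R) :
    I.cardQuot = (I.colon {x}).cardQuot * (I ⊔ span {x}).cardQuot := by
  have colon_index : (I.colon {x}).cardQuot =
      I.toAddSubgroup.relIndex (span {x}).toAddSubgroup := by
    have colon_eq : (I.colon {x}).toAddSubgroup =
        I.toAddSubgroup.comap (AddMonoidHom.mulRight x) := by
      ext r
      simp
    have range_eq : (AddMonoidHom.mulRight x).range = (span {x}).toAddSubgroup := by
      ext r
      simp [mem_span_singleton']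
    rw [Submodule.cardQuot, colon_eq, AddSubgroup.index_comap, range_eq]
  rw [colon_index, ← AddSubgroup.relIndex_sup_left, ← Submodule.sup_toAddSubgroup]
  exact (AddSubgroup.relIndex_mul_index (Submodule.toAddSubgroup_mono le_sup_left)).symm

theorem card_eq_index_of_surjective {G β : Type*} [AddGroup G] (H : AddSubgroup G) {f : G → β}
    (hf : Function.Surjective f) (h : ∀ x y, f x = f y ↔ -x + y ∈ H) : Nat.card β = H.index :=
  Nat.card_congr <| (Setoid.quotientKerEquivOfSurjective f hf).symm.trans <|
    Quotient.congrRight fun x y => by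
      rw [Setoid.ker_def, h, QuotientAddGroup.leftRel_apply]

end Index

section Dedekind

variable {A : Type*} [CommRing A] [IsDedekindDomain A]

theorem exists_mul_sup_span_eq_and_colon_eq {𝔞 𝔡 : Ideal A} (h𝔞 : 𝔞 ≠ ⊥) (h𝔡 : 𝔡 ≠ ⊥) :
    ∃ a, 𝔞 * 𝔡 ⊔ span {a} = 𝔡 ∧ (𝔞 * 𝔡).colon {a} = 𝔞 := by
  obtain ⟨a, ha⟩ := IsDedekindDomain.exists_sup_span_eq (mul_le_right : 𝔞 * 𝔡 ≤ 𝔡)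
    (mul_ne_zero h𝔞 h𝔡)
  have ha𝔡 : a ∈ 𝔡 := ha ▸ mem_sup_right (mem_span_singleton_self a)
  refine ⟨a, ha, le_antisymm (fun c hc => ?_) fun c hc => ?_⟩
  · have span_mul_le : span {c} * 𝔡 ≤ 𝔞 * 𝔡 := by
      conv_lhs => rw [← ha]
      rw [Ideal.mul_sup, span_singleton_mul_span_singleton, sup_le_iff, span_singleton_le_iff_mem]
      exact ⟨mul_le_right, Submodule.mem_colon_singleton.1 hc⟩
    rwa [← dvd_iff_le, mul_dvd_mul_iff_right h𝔡, dvd_iff_le, span_singleton_le_iff_mem]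
      at span_mul_le
  · exact Submodule.mem_colon_singleton.2 (mul_mem_mul hc ha𝔡)

theorem cardQuot_mul_of_ne_bot {𝔞 𝔡 : Ideal A} (h𝔞 : 𝔞 ≠ ⊥) (h𝔡 : 𝔡 ≠ ⊥) :
    (𝔞 * 𝔡).cardQuot = 𝔞.cardQuot * 𝔡.cardQuot := by
  obtain ⟨a, hsup, hcolon⟩ := exists_mul_sup_span_eq_and_colon_eq h𝔞 h𝔡
  rw [cardQuot_eq_colon_mul_sup _ a, hsup, hcolon]

end Dedekind

section PolynomialIdeals

variable {A : Type*} [CommRing A]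

/-- The ideal `I₀` of constant coefficients of the elements of `I`, i.e. the image of `I` in
`A[X] ⧸ (X) = A`; its norm compares those of `I` and `(I : X)`. -/
noncomputable abbrev constCoeffIdeal (I : Ideal A[X]) : Ideal A := I.map constantCoeff

theorem mem_constCoeffIdeal {I : Ideal A[X]} {a : A} :
    a ∈ constCoeffIdeal I ↔ ∃ p ∈ I, p.coeff 0 = a :=
  mem_map_iff_of_surjective _ constantCoeff_surjective

theorem mem_colon_X {I : Ideal A[X]} {p : A[X]} : p ∈ I.colon {X} ↔ X * p ∈ I := by
  rw [Submodule.mem_colon_singleton, smul_eq_mul, mul_comm]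

theorem X_pow_succ_mem_iff {I : Ideal A[X]} {n : ℕ} : X ^ (n + 1) ∈ I ↔ X ^ n ∈ I.colon {X} := by
  rw [mem_colon_X, pow_succ']

theorem cardQuot_constCoeffIdeal (I : Ideal A[X]) :
    (constCoeffIdeal I).cardQuot = (I ⊔ span {X}).cardQuot := by
  rw [← cardQuot_comap_of_surjective (f := constantCoeff) constantCoeff_surjective,
    comap_map_of_surjective (constantCoeff : A[X] →+* A) constantCoeff_surjective,
    ← RingHom.ker_eq_comap_bot,
    ker_constantCoeff]

theorem cardQuot_eq_colon_X_mul (I : Ideal A[X]) :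
    I.cardQuot = (I.colon {X}).cardQuot * (constCoeffIdeal I).cardQuot := by
  rw [cardQuot_eq_colon_mul_sup I X, cardQuot_constCoeffIdeal]

theorem cardQuot_colon_X_ne_zero {I : Ideal A[X]} (hI : I.cardQuot ≠ 0) :
    (I.colon {X}).cardQuot ≠ 0 :=
  left_ne_zero_of_mul (cardQuot_eq_colon_X_mul I ▸ hI)

theorem cardQuot_constCoeffIdeal_ne_zero {I : Ideal A[X]} (hI : I.cardQuot ≠ 0) :
    (constCoeffIdeal I).cardQuot ≠ 0 :=
  right_ne_zero_of_mul (cardQuot_eq_colon_X_mul I ▸ hI)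

theorem relIndex_colon_X {J : Ideal A[X]} (hJ : J.cardQuot ≠ 0) :
    J.toAddSubgroup.relIndex (J.colon {X}).toAddSubgroup = (constCoeffIdeal J).cardQuot := by
  refine Nat.eq_of_mul_eq_mul_left (Nat.pos_of_ne_zero (cardQuot_colon_X_ne_zero hJ)) ?_
  rw [← cardQuot_eq_colon_X_mul J, mul_comm]
  exact AddSubgroup.relIndex_mul_index (Submodule.toAddSubgroup_mono le_colon)

theorem constCoeffIdeal_le_constCoeffIdeal_colon_X (I : Ideal A[X]) :
    constCoeffIdeal I ≤ constCoeffIdeal (I.colon {X}) :=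
  map_mono le_colon

theorem eq_of_le_of_colon_X_eq {I I' : Ideal A[X]} (hle : I ≤ I')
    (hcolon : I.colon {X} = I'.colon {X}) (hconst : constCoeffIdeal I = constCoeffIdeal I') :
    I = I' := by
  refine le_antisymm hle fun p hp => ?_
  obtain ⟨q, hq, hqp⟩ := mem_constCoeffIdeal.1 (hconst ▸ mem_constCoeffIdeal.2 ⟨p, hp, rfl⟩)
  obtain ⟨r, hr⟩ : X ∣ p - q := X_dvd_iff.2 (by rw [coeff_sub, hqp, sub_self])
  have hrI : r ∈ I.colon {X} := by
    rw [hcolon, mem_colon_X, ← hr]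
    exact I'.sub_mem hp (hle hq)
  rw [← sub_add_cancel p q, hr]
  exact I.add_mem (mem_colon_X.1 hrI) hq

variable {J : Ideal A[X]} {𝔡 : Ideal A} {f r : A[X]}

/-- The ideal `X J + 𝔞𝔡[X] + (f)` with `𝔞 = J ∩ A`. For suitable `f ∈ J` these are all the ideals
`I` with `(I : X) = J` and `I₀ = 𝔡`. -/
noncomputable def gluedIdeal (J : Ideal A[X]) (𝔡 : Ideal A) (f : A[X]) : Ideal A[X] :=
  span {X} * J ⊔ (J.comap C * 𝔡).map C ⊔ span {f}

theorem self_mem_gluedIdeal : f ∈ gluedIdeal J 𝔡 f :=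
  mem_sup_right (mem_span_singleton_self f)

theorem X_mul_mem_gluedIdeal (hr : r ∈ J) : X * r ∈ gluedIdeal J 𝔡 f :=
  mem_sup_left (mem_sup_left (mul_mem_mul (mem_span_singleton_self X) hr))

theorem constCoeffIdeal_gluedIdeal :
    constCoeffIdeal (gluedIdeal J 𝔡 f) = J.comap C * 𝔡 ⊔ span {f.coeff 0} := by
  have constantCoeff_comp_C : (constantCoeff : A[X] →+* A).comp C = RingHom.id A := by
    ext
    simp
  simp [constCoeffIdeal, gluedIdeal, Ideal.map_sup, Ideal.map_mul, map_span, Ideal.map_map,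
    constantCoeff_comp_C]

theorem colon_X_gluedIdeal (hf : f ∈ J)
    (hcolon : (J.comap C * 𝔡).colon {f.coeff 0} = J.comap C) :
    (gluedIdeal J 𝔡 f).colon {X} = J := by
  refine le_antisymm (fun p hp => ?_) fun p hp => mem_colon_X.2 (X_mul_mem_gluedIdeal hp)
  rw [mem_colon_X, gluedIdeal, sup_comm, mem_span_singleton_sup] at hp
  obtain ⟨q, k, hk, hp⟩ := hp
  obtain ⟨x, hx, b, hb, rfl⟩ := Submodule.mem_sup.1 hk
  obtain ⟨j, hj, rfl⟩ := mem_span_singleton_mul.1 hx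
  rw [mem_map_C_iff] at hb
  have hconst : q.coeff 0 * f.coeff 0 + b.coeff 0 = 0 := by
    simpa using congrArg (coeff · 0) hp
  have hqJ : C (q.coeff 0) ∈ J := by
    rw [← mem_comap, ← hcolon, Submodule.mem_colon_singleton, smul_eq_mul,
      eq_neg_of_add_eq_zero_left hconst]
    exact neg_mem (hb 0)
  have hbJ : b.divX ∈ J := map_le_iff_le_comap.2 mul_le_left <| mem_map_C_iff.2 fun n => by
    rw [coeff_divX]
    exact hb (n + 1)
  have hp_eq : p = q.divX * f + f.divX * C (q.coeff 0) + j + b.divX := by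
    refine isRegular_X.left ?_
    have hconstC : C (q.coeff 0) * C (f.coeff 0) + C (b.coeff 0) = 0 := by
      rw [← C_mul, ← C_add, hconst, C_0]
    linear_combination -hp - f * X_mul_divX_add q - C (q.coeff 0) * X_mul_divX_add f
      - X_mul_divX_add b + hconstC
  rw [hp_eq]
  exact add_mem (add_mem (add_mem (J.mul_mem_left _ hf) (J.mul_mem_left _ hqJ)) hj) hbJ

theorem gluedIdeal_eq_of_mem {I : Ideal A[X]} (hf : f ∈ I)
    (hsup : (I.colon {X}).comap C * constCoeffIdeal I ⊔ span {f.coeff 0} = constCoeffIdeal I)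
    (hcolon : ((I.colon {X}).comap C * constCoeffIdeal I).colon {f.coeff 0} =
      (I.colon {X}).comap C) :
    gluedIdeal (I.colon {X}) (constCoeffIdeal I) f = I := by
  have X_mul_le : span {X} * I.colon {X} ≤ I :=
    span_singleton_mul_le_iff.2 fun r hr => mem_colon_X.1 hr
  have map_C_le : ((I.colon {X}).comap C * constCoeffIdeal I).map C ≤ I := by
    rw [map_le_iff_le_comap, mul_le]
    intro e he d hd
    obtain ⟨p, hp, rfl⟩ := mem_constCoeffIdeal.1 hd
    have hX : X * (p.divX * C e) ∈ I := mem_colon_X.1 (mul_mem_left _ _ he)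
    have hC : C (e * p.coeff 0) = C e * p - X * (p.divX * C e) := by
      rw [C_mul]
      linear_combination C e * X_mul_divX_add p
    rw [mem_comap, hC]
    exact sub_mem (I.mul_mem_left _ hp) hX
  refine eq_of_le_of_colon_X_eq (sup_le (sup_le X_mul_le map_C_le)
    ((span_singleton_le_iff_mem I).2 hf)) (colon_X_gluedIdeal (le_colon hf) hcolon) ?_
  rw [constCoeffIdeal_gluedIdeal, hsup]

theorem gluedIdeal_add_X_mul_eq_iff (hf : f ∈ J)
    (hsup : J.comap C * 𝔡 ⊔ span {f.coeff 0} = 𝔡)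
    (hcolon : (J.comap C * 𝔡).colon {f.coeff 0} = J.comap C) :
    gluedIdeal J 𝔡 (f + X * r) = gluedIdeal J 𝔡 f ↔ r ∈ J := by
  have colon_eq := colon_X_gluedIdeal hf hcolon
  have const_eq : constCoeffIdeal (gluedIdeal J 𝔡 f) = 𝔡 :=
    constCoeffIdeal_gluedIdeal.trans hsup
  constructor
  · intro h
    have hmem : f + X * r ∈ gluedIdeal J 𝔡 f := h ▸ self_mem_gluedIdeal
    rwa [← colon_eq, mem_colon_X, ← add_mem_cancel_left self_mem_gluedIdeal]
  · intro hrJ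
    have h := gluedIdeal_eq_of_mem (f := f + X * r) (I := gluedIdeal J 𝔡 f)
      (add_mem self_mem_gluedIdeal (X_mul_mem_gluedIdeal hrJ))
    have coeff_eq : (f + X * r).coeff 0 = f.coeff 0 := by simp
    rw [colon_eq, const_eq, coeff_eq] at h
    exact h hsup hcolon

/-- The ideals `I` of `A[X]` with `(I : X) = J` and `I₀ = 𝔡`, i.e. the fiber over `(J, 𝔡)` along
which the recursion sums. -/
abbrev ColonConstFiber (J : Ideal A[X]) (𝔡 : Ideal A) :=
  {I : Ideal A[X] // I.colon {X} = J ∧ constCoeffIdeal I = 𝔡}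

theorem comap_C_ne_bot [Infinite A] (hJ : J.cardQuot ≠ 0) : J.comap C ≠ ⊥ := by
  intro h
  have hdvd := cardQuot_comap_dvd C J
  rw [h, Submodule.cardQuot_bot, zero_dvd_iff] at hdvd
  exact hJ hdvd

theorem card_colonConstFiber [IsDedekindDomain A] [Infinite A] (hJ : J.cardQuot ≠ 0)
    (h𝔡 : 𝔡 ≠ ⊥) (hle : 𝔡 ≤ constCoeffIdeal J) :
    Nat.card (ColonConstFiber J 𝔡) = (constCoeffIdeal J).cardQuot := by
  obtain ⟨a, hsup, hcolon⟩ := exists_mul_sup_span_eq_and_colon_eq (comap_C_ne_bot hJ) h𝔡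
  have ha : a ∈ 𝔡 := hsup ▸ mem_sup_right (mem_span_singleton_self a)
  obtain ⟨f, hf, rfl⟩ := mem_constCoeffIdeal.1 (hle ha)
  have coeff_eq (r : A[X]) : (f + X * r).coeff 0 = f.coeff 0 := by simp
  have add_mem_J (r : J.colon {X}) : f + X * r.1 ∈ J := add_mem hf (mem_colon_X.1 r.2)
  let glue (r : J.colon {X}) : ColonConstFiber J 𝔡 :=
    ⟨gluedIdeal J 𝔡 (f + X * r.1), colon_X_gluedIdeal (add_mem_J r) (by rwa [coeff_eq]),
      by rwa [constCoeffIdeal_gluedIdeal, coeff_eq]⟩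
  have glue_surjective : Function.Surjective glue := by
    rintro ⟨I, rfl, rfl⟩
    obtain ⟨p, hp, hpf⟩ := mem_constCoeffIdeal.1 ha
    obtain ⟨r, hr⟩ : X ∣ p - f := X_dvd_iff.2 (by rw [coeff_sub, hpf, sub_self])
    have hpr : f + X * r = p := by rw [← hr, add_sub_cancel]
    have hrJ : r ∈ (I.colon {X}).colon {X} := mem_colon_X.2 (hr ▸ sub_mem (le_colon hp) hf)
    refine ⟨⟨r, hrJ⟩, Subtype.ext ?_⟩
    simp only [glue, hpr]
    exact gluedIdeal_eq_of_mem hp (by rwa [hpf]) (by rwa [hpf])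
  have glue_eq_iff (x y : J.colon {X}) : glue x = glue y ↔
      -x + y ∈ J.toAddSubgroup.addSubgroupOf (J.colon {X}).toAddSubgroup := by
    have h := gluedIdeal_add_X_mul_eq_iff (r := (-x + y).1) (add_mem_J x) (by rwa [coeff_eq])
      (by rwa [coeff_eq])
    have add_eq : f + X * x.1 + X * (-x + y).1 = f + X * y.1 := by
      push_cast
      ring
    rw [add_eq] at h
    rw [eq_comm, Subtype.ext_iff]
    exact h
  rw [card_eq_index_of_surjective _ glue_surjective glue_eq_iff]
  exact relIndex_colon_X hJ

end PolynomialIdeals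

section Summation

variable {ι : Type*} {κ : ι → Type*} {f : ι → ℂ} {a : ℂ}

theorem hasSum_natCard_mul_of_hasSum_sigma (h : HasSum (fun x : Σ i, κ i => f x.1) a) :
    HasSum (fun i => (Nat.card (κ i) : ℂ) * f i) a := by
  simpa only [tsum_const, nsmul_eq_mul] using
    h.sigma fun i => (h.summable.sigma_factor i).hasSum

theorem hasSum_sigma_of_hasSum_natCard_mul [∀ i, Finite (κ i)]
    (h : HasSum (fun i => (Nat.card (κ i) : ℂ) * f i) a) :
    HasSum (fun x : Σ i, κ i => f x.1) a := by
  have summable_sigma : Summable fun x : Σ i, κ i => f x.1 := by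
    refine Summable.of_norm ((summable_sigma_of_nonneg fun _ => norm_nonneg _).2
      ⟨fun i => Summable.of_finite, ?_⟩)
    simpa only [tsum_const, nsmul_eq_mul, norm_mul, Complex.norm_natCast] using h.summable.norm
  convert! summable_sigma.hasSum using 1
  exact h.unique (hasSum_natCard_mul_of_hasSum_sigma summable_sigma.hasSum)

theorem hasSum_prod_mul {κ : Type*} {g : κ → ℂ} {b : ℂ} (hf : HasSum f a) (hg : HasSum g b) :
    HasSum (fun p : ι × κ => f p.1 * g p.2) (a * b) :=
  hf.mul hg (summable_mul_of_summable_norm hf.summable.norm hg.summable.norm)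

end Summation

section FiniteIndex

/-- The ideals of `R` with finite quotient, which index Dedekind zeta sums;
`Submodule.cardQuot` is `0` on the other ideals. -/
abbrev FiniteIndexIdeal (R : Type*) [CommRing R] :=
  {I : Ideal R // I.cardQuot ≠ 0}

theorem FiniteIndexIdeal.ne_bot {R : Type*} [CommRing R] [Infinite R] (I : FiniteIndexIdeal R) :
    I.1 ≠ ⊥ :=
  fun h => I.2 (by rw [h, Submodule.cardQuot_bot])

/-- The norm of an ideal of finite index, i.e. the cardinality of its quotient ring, as a positive
integer. -/
noncomputable def FiniteIndexIdeal.norm {R : Type*} [CommRing R] (I : FiniteIndexIdeal R) : ℕ+ :=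
  ⟨I.1.cardQuot, Nat.pos_of_ne_zero I.2⟩

theorem card_finiteIndexIdeal_norm_eq (R : Type) [CommRing R] (k : ℕ+) :
    Nat.card {I : FiniteIndexIdeal R // I.norm = k} = idealCount R k := by
  rw [idealCount, ← Nat.card_coe_set_eq]
  refine Nat.card_congr ((Equiv.subtypeEquivRight fun I => PNat.coe_inj.symm).trans
    (Equiv.subtypeSubtypeEquivSubtype (p := fun I : Ideal R => I.cardQuot ≠ 0)
      (q := fun I => I.cardQuot = k) fun {I} hI => ?_))
  rw [hI]
  exact k.ne_zero

theorem hasSum_idealCount {R : Type} [CommRing R] {s z : ℂ}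
    (h : HasSum (fun I : FiniteIndexIdeal R => (I.norm : ℂ) ^ (-s)) z) :
    HasSum (fun k : ℕ+ => (idealCount R k : ℂ) / (k : ℂ) ^ s) z := by
  have h_sigma : HasSum (fun x : Σ k : ℕ+, {I : FiniteIndexIdeal R // I.norm = k} =>
      (x.1 : ℂ) ^ (-s)) z :=
    ((Equiv.sigmaFiberEquiv FiniteIndexIdeal.norm).hasSum_iff.2 h).congr_fun fun x =>
      congrArg (fun k : ℕ+ => (k : ℂ) ^ (-s)) x.2.2.symm
  have h_card := hasSum_natCard_mul_of_hasSum_sigma (f := fun k : ℕ+ => (k : ℂ) ^ (-s)) h_sigma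
  refine h_card.congr_fun fun k => ?_
  rw [card_finiteIndexIdeal_norm_eq, Complex.cpow_neg, div_eq_mul_inv]

theorem one_lt_re_add_one_mul_sub {s : ℂ} (hs : 1 < s.re) (j : ℕ) :
    1 < (((j : ℂ) + 1) * s - j).re := by
  have re_eq : (((j : ℂ) + 1) * s - j).re = s.re + j * (s.re - 1) := by
    simp only [Complex.sub_re, Complex.mul_re, Complex.add_re, Complex.add_im, Complex.natCast_re,
      Complex.natCast_im, Complex.one_re, Complex.one_im, add_zero, zero_mul, sub_zero]
    ring
  rw [re_eq]
  exact lt_add_of_lt_of_nonneg hs (mul_nonneg j.cast_nonneg (sub_nonneg.2 hs.le))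

theorem hasSum_pnat_cpow_neg {s : ℂ} (hs : 1 < s.re) :
    HasSum (fun k : ℕ+ => (k : ℂ) ^ (-s)) (riemannZeta s) := by
  have h : HasSum (LSeries.term 1 s) (riemannZeta s) := LSeriesHasSum_one hs
  rw [← PNat.coe_injective.hasSum_iff] at h
  · simpa [Function.comp_def, LSeries.term_of_ne_zero, Complex.cpow_neg] using h
  · intro k hk
    obtain rfl : k = 0 := by_contra fun hk₀ => hk ⟨⟨k, Nat.pos_of_ne_zero hk₀⟩, rfl⟩
    exact LSeries.term_zero 1 s

theorem norm_int_bijective : Function.Bijective (FiniteIndexIdeal.norm (R := ℤ)) := by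
  refine ⟨fun I J h => Subtype.ext ?_, fun k => ?_⟩
  · have absNorm_eq : absNorm I.1 = absNorm J.1 := congrArg PNat.val h
    rw [← Int.ideal_span_absNorm_eq_self I.1, absNorm_eq, Int.ideal_span_absNorm_eq_self]
  · have card_eq : (span {((k : ℕ) : ℤ)}).cardQuot = k := Int.card_ideal_quot k
    exact ⟨⟨span {((k : ℕ) : ℤ)}, card_eq.trans_ne k.ne_zero⟩, PNat.eq card_eq⟩

theorem hasSum_finiteIndexIdeal_int {s : ℂ} (hs : 1 < s.re) :
    HasSum (fun I : FiniteIndexIdeal ℤ => (I.norm : ℂ) ^ (-s)) (riemannZeta s) :=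
  (Equiv.ofBijective _ norm_int_bijective).hasSum_iff.2 (hasSum_pnat_cpow_neg hs)

end FiniteIndex

section Recursion

variable {A : Type*} [CommRing A]

/-- The ideals of finite index in `A[X] ⧸ (X ^ n)`, encoded as ideals of `A[X]` that contain
`X ^ n`, so that they can be compared for different `n`. -/
abbrev TruncIdeal (A : Type*) [CommRing A] (n : ℕ) :=
  {I : Ideal A[X] // I.cardQuot ≠ 0 ∧ X ^ n ∈ I}

/-- The term of `I` in the two-variable zeta function of `A[X] ⧸ (X ^ n)`; the weight in `N(I₀)`
makes the zeta functions for successive `n` satisfy a recursion. -/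
noncomputable def zetaTerm (s t : ℂ) (I : Ideal A[X]) : ℂ :=
  (I.cardQuot : ℂ) ^ (-s) * ((constCoeffIdeal I).cardQuot : ℂ) ^ (-t)

theorem hasSum_finiteIndexIdeal_quotient_X_pow {n : ℕ} {s z : ℂ}
    (h : HasSum (fun I : TruncIdeal A n => zetaTerm s 0 I.1) z) :
    HasSum (fun I : FiniteIndexIdeal (A[X] ⧸ span {(X : A[X]) ^ n}) => (I.norm : ℂ) ^ (-s)) z := by
  let mk := Ideal.Quotient.mk (span {(X : A[X]) ^ n})
  have mk_surjective : Function.Surjective mk := Ideal.Quotient.mk_surjective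
  have cardQuot_comap := cardQuot_comap_of_surjective mk_surjective
  let comapMk (I : FiniteIndexIdeal (A[X] ⧸ span {(X : A[X]) ^ n})) : TruncIdeal A n :=
    ⟨I.1.comap mk, (cardQuot_comap I.1).trans_ne I.2, by
      rw [mem_comap, Ideal.Quotient.eq_zero_iff_mem.2 (mem_span_singleton_self _)]
      exact zero_mem _⟩
  have comapMk_bijective : Function.Bijective comapMk := by
    refine ⟨fun I J hIJ => Subtype.ext
      (comap_injective_of_surjective mk mk_surjective (congrArg Subtype.val hIJ)), ?_⟩
    rintro ⟨I, hI, hX⟩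
    have comap_map : (I.map mk).comap mk = I := by
      rw [comap_map_mk ((span_singleton_le_iff_mem I).2 hX)]
    exact ⟨⟨I.map mk, by rwa [← cardQuot_comap, comap_map]⟩, Subtype.ext comap_map⟩
  refine ((Equiv.ofBijective comapMk comapMk_bijective).hasSum_iff.2 h).congr_fun fun I => ?_
  have term_eq : zetaTerm s 0 (comapMk I).1 = (I.1.cardQuot : ℂ) ^ (-s) := by
    simp only [zetaTerm, comapMk, cardQuot_comap, neg_zero, Complex.cpow_zero, mul_one]
  exact term_eq.symm

theorem constCoeffIdeal_ne_bot [Infinite A] {J : Ideal A[X]} (hJ : J.cardQuot ≠ 0) :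
    constCoeffIdeal J ≠ ⊥ :=
  FiniteIndexIdeal.ne_bot ⟨_, cardQuot_constCoeffIdeal_ne_zero hJ⟩

theorem cardQuot_mul_zetaTerm {J : Ideal A[X]} (hJ : J.cardQuot ≠ 0) (s t : ℂ) :
    ((constCoeffIdeal J).cardQuot : ℂ) * zetaTerm s t J = zetaTerm s (t - 1) J := by
  have hJ₀ : ((constCoeffIdeal J).cardQuot : ℂ) ≠ 0 :=
    Nat.cast_ne_zero.2 (cardQuot_constCoeffIdeal_ne_zero hJ)
  rw [zetaTerm, zetaTerm, show -(t - 1) = -t + 1 by ring, Complex.cpow_add _ _ hJ₀,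
    Complex.cpow_one]
  ring

variable [IsDedekindDomain A] [Infinite A]

theorem cardQuot_mul_constCoeffIdeal {J : Ideal A[X]} (hJ : J.cardQuot ≠ 0)
    (𝔪 : FiniteIndexIdeal A) :
    (𝔪.1 * constCoeffIdeal J).cardQuot = 𝔪.norm * (constCoeffIdeal J).cardQuot :=
  cardQuot_mul_of_ne_bot 𝔪.ne_bot (constCoeffIdeal_ne_bot hJ)

theorem zetaTerm_colonConstFiber {J : Ideal A[X]} (hJ : J.cardQuot ≠ 0) (𝔪 : FiniteIndexIdeal A)
    (I : ColonConstFiber J (𝔪.1 * constCoeffIdeal J)) (s t : ℂ) :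
    zetaTerm s t I.1 = zetaTerm s (s + t) J * (𝔪.norm : ℂ) ^ (-(s + t)) := by
  have natCast_mul_cpow (a b : ℕ) (z : ℂ) : ((a * b : ℕ) : ℂ) ^ z = (a : ℂ) ^ z * (b : ℂ) ^ z := by
    rw [Nat.cast_mul, Complex.natCast_mul_natCast_cpow]
  have hJ₀ : ((constCoeffIdeal J).cardQuot : ℂ) ≠ 0 :=
    Nat.cast_ne_zero.2 (cardQuot_constCoeffIdeal_ne_zero hJ)
  rw [zetaTerm, zetaTerm, cardQuot_eq_colon_X_mul, I.2.1, I.2.2,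
    cardQuot_mul_constCoeffIdeal hJ, natCast_mul_cpow, natCast_mul_cpow, natCast_mul_cpow,
    neg_add, Complex.cpow_add _ _ hJ₀, Complex.cpow_add _ _ (Nat.cast_ne_zero.2 𝔪.norm.ne_zero)]
  ring

/-- The ideals `I` together with the pair `((I : X), 𝔪)`, where `I₀ = 𝔪 * (I : X)₀`; summing over
this type separates the contributions of `(I : X)` and `𝔪`. -/
abbrev ColonConstData (A : Type*) [CommRing A] (n : ℕ) :=
  Σ p : TruncIdeal A n × FiniteIndexIdeal A,
    ColonConstFiber p.1.1 (p.2.1 * constCoeffIdeal p.1.1)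

/-- The map forgetting the pair `((I : X), 𝔪)`, which the ideal `I` determines. -/
def truncIdealOfData {n : ℕ} (x : ColonConstData A n) : TruncIdeal A (n + 1) :=
  ⟨x.2.1, by
    rw [cardQuot_eq_colon_X_mul, x.2.2.1, x.2.2.2, cardQuot_mul_constCoeffIdeal x.1.1.2.1]
    exact mul_ne_zero x.1.1.2.1
      (mul_ne_zero x.1.2.norm.ne_zero (cardQuot_constCoeffIdeal_ne_zero x.1.1.2.1)), by
    rw [X_pow_succ_mem_iff, x.2.2.1]
    exact x.1.1.2.2⟩

theorem truncIdealOfData_bijective (n : ℕ) :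
    Function.Bijective (truncIdealOfData : ColonConstData A n → TruncIdeal A (n + 1)) := by
  constructor
  · rintro ⟨⟨⟨J, hJ⟩, 𝔪⟩, ⟨I, hcolon, hconst⟩⟩ ⟨⟨⟨J', hJ'⟩, 𝔪'⟩, ⟨I', hcolon', hconst'⟩⟩ h
    obtain rfl : I = I' := congrArg Subtype.val h
    obtain rfl : I.colon {X} = J := hcolon
    obtain rfl : I.colon {X} = J' := hcolon'
    obtain rfl : 𝔪 = 𝔪' := Subtype.ext <|
      mul_right_cancel₀ (constCoeffIdeal_ne_bot hJ.1) (hconst.symm.trans hconst')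
    rfl
  · rintro ⟨I, hI, hX⟩
    obtain ⟨𝔪, h𝔪⟩ := dvd_iff_le.2 (constCoeffIdeal_le_constCoeffIdeal_colon_X I)
    rw [mul_comm] at h𝔪
    have const_le : constCoeffIdeal I ≤ 𝔪 := h𝔪 ▸ mul_le_left
    have h𝔪_card : 𝔪.cardQuot ≠ 0 := ne_zero_of_dvd_ne_zero (cardQuot_constCoeffIdeal_ne_zero hI)
      (AddSubgroup.index_dvd_of_le (Submodule.toAddSubgroup_mono const_le))
    let colonIdeal : TruncIdeal A n :=
      ⟨I.colon {X}, cardQuot_colon_X_ne_zero hI, X_pow_succ_mem_iff.1 hX⟩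
    exact ⟨⟨(colonIdeal, ⟨𝔪, h𝔪_card⟩), ⟨I, rfl, h𝔪⟩⟩, rfl⟩

theorem hasSum_zetaTerm_truncIdeal_succ {n : ℕ} {s t z w : ℂ}
    (hz : HasSum (fun J : TruncIdeal A n => zetaTerm s (s + t - 1) J.1) z)
    (hw : HasSum (fun 𝔪 : FiniteIndexIdeal A => (𝔪.norm : ℂ) ^ (-(s + t))) w) :
    HasSum (fun I : TruncIdeal A (n + 1) => zetaTerm s t I.1) (z * w) := by
  have card_fiber (p : TruncIdeal A n × FiniteIndexIdeal A) :
      Nat.card (ColonConstFiber p.1.1 (p.2.1 * constCoeffIdeal p.1.1)) =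
        (constCoeffIdeal p.1.1).cardQuot :=
    card_colonConstFiber p.1.2.1 (mul_ne_zero p.2.ne_bot (constCoeffIdeal_ne_bot p.1.2.1))
      mul_le_right
  have finite_fiber (p : TruncIdeal A n × FiniteIndexIdeal A) :
      Finite (ColonConstFiber p.1.1 (p.2.1 * constCoeffIdeal p.1.1)) :=
    Nat.finite_of_card_ne_zero
      ((card_fiber p).trans_ne (cardQuot_constCoeffIdeal_ne_zero p.1.2.1))
  rw [← (Equiv.ofBijective _ (truncIdealOfData_bijective (A := A) n)).hasSum_iff]
  have h_sigma := hasSum_sigma_of_hasSum_natCard_mul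
    (κ := fun p : TruncIdeal A n × FiniteIndexIdeal A =>
      ColonConstFiber p.1.1 (p.2.1 * constCoeffIdeal p.1.1))
    (f := fun p => zetaTerm s (s + t) p.1.1 * (p.2.norm : ℂ) ^ (-(s + t))) (a := z * w)
    ((hasSum_prod_mul hz hw).congr_fun fun p => by
      rw [card_fiber, ← mul_assoc, cardQuot_mul_zetaTerm p.1.2.1])
  exact h_sigma.congr_fun fun x => zetaTerm_colonConstFiber x.1.1.2.1 x.1.2 x.2 s t

theorem hasSum_zetaTerm_truncIdeal (n : ℕ) {s t : ℂ} {Z : ℕ → ℂ}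
    (hZ : ∀ j < n, HasSum (fun 𝔪 : FiniteIndexIdeal A =>
      (𝔪.norm : ℂ) ^ (-(((j : ℂ) + 1) * s - j + t))) (Z j)) :
    HasSum (fun I : TruncIdeal A n => zetaTerm s t I.1) (∏ j ∈ Finset.range n, Z j) := by
  induction n generalizing t Z with
  | zero =>
    have eq_top (I : TruncIdeal A 0) : I.1 = ⊤ :=
      (eq_top_iff_one _).2 (pow_zero (X : A[X]) ▸ I.2.2)
    let topIdeal : TruncIdeal A 0 := ⟨⊤, by simp⟩
    have term_top : zetaTerm s t (⊤ : Ideal A[X]) = 1 := by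
      simp [zetaTerm, constCoeffIdeal, Ideal.map_top]
    rw [Finset.prod_range_zero, ← term_top]
    exact hasSum_single topIdeal fun I hI => (hI (Subtype.ext (eq_top I))).elim
  | succ n ih =>
    rw [Finset.prod_range_succ']
    refine hasSum_zetaTerm_truncIdeal_succ (ih fun j hj => ?_) ?_
    · convert! hZ (j + 1) (Nat.succ_lt_succ hj) using 4
      push_cast
      ring
    · convert! hZ 0 n.succ_pos using 4
      simp

end Recursion

theorem ideal_zeta_int_poly_quot_pow_general {A : Type} [CommRing A] [IsDedekindDomain A]
    [Infinite A] (n : ℕ) {s : ℂ} {Z : ℕ → ℂ}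
    (hZ : ∀ j < n, HasSum (fun 𝔪 : FiniteIndexIdeal A =>
      (𝔪.norm : ℂ) ^ (-(((j : ℂ) + 1) * s - j))) (Z j)) :
    HasSum (fun k : ℕ+ => (idealCount (A[X] ⧸ span {(X : A[X]) ^ n}) k : ℂ) / (k : ℂ) ^ s)
      (∏ j ∈ Finset.range n, Z j) :=
  hasSum_idealCount <| hasSum_finiteIndexIdeal_quotient_X_pow <| hasSum_zetaTerm_truncIdeal n <| by
    simpa only [add_zero] using hZ

/-- For `R = ℤ[X]/(X^n)` and `Re s > 1`, the ideal zeta function of `R` converges at `s`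
and equals `∏_{j=1}^n ζ(js - (j-1))`. -/
theorem ideal_zeta_int_poly_quot_pow (n : ℕ) (hn : 0 < n) (s : ℂ) (hs : 1 < s.re) :
    HasSum
      (fun k : ℕ+ =>
        (idealCount (Polynomial ℤ ⧸ Ideal.span {(Polynomial.X : Polynomial ℤ) ^ n}) k : ℂ) /
          (k : ℂ) ^ s)
      (∏ j ∈ Finset.range n, riemannZeta (((j : ℂ) + 1) * s - (j : ℂ))) :=
  ideal_zeta_int_poly_quot_pow_general n fun j _ =>
    hasSum_finiteIndexIdeal_int (one_lt_re_add_one_mul_sub hs j)
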